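/- Grade R = ℂ[b,σ₁,ρ,σ₂,τ,σ₃] by deg b = deg σ₁ = 1, deg ρ = deg σ₂ = deg τ = 2, deg σ₃ = 3, so that the ideal (τ²−ρσ₂, τσ₃, ρσ₃) is homogeneous (its generators have degrees 4, 5, 5). Then the Hilbert series of the graded quotient satisfies (1−T)·(1−T²)²·(1−T³) · Σ_{p≥0} dim_ℂ( (R/(τ²−ρσ₂, τσ₃, ρσ₃))_p ) · T^p = 1 + T + 2T² + 2T³ + 2T⁴ in ℤ[[T]]. -/

import Mathlib

/-!
For a homogeneous ideal `J` and a form `f` of degree `d`, multiplication by `f` gives the exact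
sequence `0 → (A/(J : f))(-d) → A/J → A/(J + (f)) → 0`, so Hilbert series satisfy
`H(A/J) = T^d H(A/(J : f)) + H(A/(J + (f)))`. Take `J = (τ² - ρσ₂, τσ₃, ρσ₃)` and `f = σ₃`.
Since `σ₃(ρ, τ) ⊆ J ⊆ (ρ, τ)` and the prime ideal `(ρ, τ)` does not contain `σ₃`, we get
`J : σ₃ = (ρ, τ)`, while `J + (σ₃) = (σ₃, τ² - ρσ₂)` defines a hypersurface in the polynomial
ring `R/(σ₃)`. Hence `H(R/J) = T³ H(R/(ρ, τ)) + (1 - T⁴) H(R/(σ₃))`, and both quotients on the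
right are polynomial rings.
-/

open MvPolynomial

noncomputable section

/-- `R = ℂ[b,σ₁,ρ,σ₂,τ,σ₃]`, with variables `0 = b`, `1 = σ₁`, `2 = ρ`, `3 = σ₂`,
`4 = τ`, `5 = σ₃`. -/
abbrev R6 : Type := MvPolynomial (Fin 6) ℂ

def ρ : R6 := X 2
def σ₂ : R6 := X 3
def τ : R6 := X 4
def σ₃ : R6 := X 5

/-- The weights: `deg b = deg σ₁ = 1`, `deg ρ = deg σ₂ = deg τ = 2`, `deg σ₃ = 3`. -/
def w6 : Fin 6 → ℕ := ![1, 1, 2, 2, 2, 3]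

/-- The ideal `(τ²−ρσ₂, τσ₃, ρσ₃)` of `R`. -/
def I : Ideal R6 := Ideal.span {τ ^ 2 - ρ * σ₂, τ * σ₃, ρ * σ₃}

/-- The degree-`p` homogeneous component of the graded quotient `R/I`: the image of the
space of weighted-homogeneous polynomials of degree `p` under the quotient map. -/
def comp6 (p : ℕ) : Submodule ℂ (R6 ⧸ I) :=
  (weightedHomogeneousSubmodule ℂ w6 p).map (Ideal.Quotient.mkₐ ℂ I).toLinearMap

lemma finrank_map_eq_of_ker_eq {R M N N' : Type*} [Ring R] [AddCommGroup M]
    [AddCommGroup N] [AddCommGroup N'] [Module R M] [Module R N] [Module R N'] (p : Submodule R M)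
    {f : M →ₗ[R] N} {g : M →ₗ[R] N'} (h : LinearMap.ker f = LinearMap.ker g) :
    Module.finrank R (p.map f) = Module.finrank R (p.map g) := by
  have hker : LinearMap.ker (f.domRestrict p) = LinearMap.ker (g.domRestrict p) := by
    rw [LinearMap.ker_domRestrict, LinearMap.ker_domRestrict, h]
  rw [← LinearMap.range_domRestrict, ← LinearMap.range_domRestrict]
  exact ((f.domRestrict p).quotKerEquivRange.symm.trans
    ((Submodule.quotEquivOfEq _ _ hker).trans (g.domRestrict p).quotKerEquivRange)).finrank_eq

lemma finrank_map_add_finrank_inf_ker {K V W : Type*} [DivisionRing K] [AddCommGroup V]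
    [AddCommGroup W] [Module K V] [Module K W] (p : Submodule K V) [FiniteDimensional K p]
    (f : V →ₗ[K] W) :
    Module.finrank K (p.map f) + Module.finrank K ↥(p ⊓ LinearMap.ker f) =
      Module.finrank K p := by
  rw [← (f.domRestrict p).finrank_range_add_finrank_ker, LinearMap.range_domRestrict,
    LinearMap.ker_domRestrict, ← Submodule.map_comap_subtype, Submodule.finrank_map_subtype_eq]

section GradedAlgebra

variable {K A : Type*} [Field K] [CommRing A] [Algebra K A]

/-- The degree-`p` component `(A/J)_p`, as the image of `𝒜 p` in `A/J`. -/
def quotientComponent (𝒜 : ℕ → Submodule K A) (J : Ideal A) (p : ℕ) : Submodule K (A ⧸ J) :=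
  (𝒜 p).map (Ideal.Quotient.mkₐ K J).toLinearMap

/-- The Hilbert series `∑ dim (A/J)_p T^p` of the quotient of a graded algebra by a homogeneous
ideal; an infinite-dimensional component would contribute `0`. -/
def hilbertSeries (𝒜 : ℕ → Submodule K A) (J : Ideal A) : PowerSeries ℤ :=
  PowerSeries.mk fun p => (Module.finrank K (quotientComponent 𝒜 J p) : ℤ)

variable {𝒜 : ℕ → Submodule K A} {J : Ideal A} {d : ℕ} {f : A}

instance [∀ p, FiniteDimensional K (𝒜 p)] (p : ℕ) :
    FiniteDimensional K (quotientComponent 𝒜 J p) :=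
  inferInstanceAs (FiniteDimensional K ((𝒜 p).map (Ideal.Quotient.mkₐ K J).toLinearMap))

lemma map_factor_quotientComponent {J' : Ideal A} (h : J ≤ J') (p : ℕ) :
    (quotientComponent 𝒜 J p).map (Ideal.Quotient.factorₐ K h).toLinearMap =
      quotientComponent 𝒜 J' p := by
  rw [quotientComponent, ← Submodule.map_comp]
  rfl

lemma mk_mem_ker_factor {J' : Ideal A} (h : J ≤ J') (a : A) :
    Ideal.Quotient.mk J a ∈ LinearMap.ker (Ideal.Quotient.factorₐ K h).toLinearMap ↔ a ∈ J' :=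
  Ideal.Quotient.eq_zero_iff_mem

lemma finrank_map_mulLeft_mk (J : Ideal A) (f : A) (p : ℕ) :
    Module.finrank K
        ((𝒜 p).map ((Ideal.Quotient.mkₐ K J).toLinearMap ∘ₗ LinearMap.mulLeft K f)) =
      Module.finrank K (quotientComponent 𝒜 (J.colon {f}) p) := by
  refine finrank_map_eq_of_ker_eq _ ?_
  ext c
  change Ideal.Quotient.mk J (f * c) = 0 ↔ Ideal.Quotient.mk (J.colon {f}) c = 0
  rw [Ideal.Quotient.eq_zero_iff_mem, Ideal.Quotient.eq_zero_iff_mem,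
    Submodule.mem_colon_singleton, smul_eq_mul, mul_comm]

variable [GradedAlgebra 𝒜]

lemma exists_sub_decompose_mul_mem (hJ : J.IsHomogeneous 𝒜) {a : A} {p : ℕ} (ha : a ∈ 𝒜 p)
    (haf : a ∈ J ⊔ Ideal.span {f}) :
    ∃ c, a - (DirectSum.decompose 𝒜 (f * c) p : A) ∈ J := by
  rw [sup_comm, Ideal.mem_span_singleton_sup] at haf
  obtain ⟨c, b, hb, rfl⟩ := haf
  refine ⟨c, ?_⟩
  have hdecomp : c * f + b - (DirectSum.decompose 𝒜 (f * c) p : A) =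
      (DirectSum.decompose 𝒜 b p : A) := by
    conv_lhs => rw [← DirectSum.decompose_of_mem_same 𝒜 ha]
    rw [DirectSum.decompose_add, DirectSum.add_apply, Submodule.coe_add, mul_comm f c,
      add_sub_cancel_left]
  rw [hdecomp]
  exact hJ p hb

lemma quotientComponent_inf_ker_factor (hJ : J.IsHomogeneous 𝒜) (hf : f ∈ 𝒜 d) (p : ℕ) :
    quotientComponent 𝒜 J (p + d) ⊓ LinearMap.ker
        (Ideal.Quotient.factorₐ K (le_sup_left : J ≤ J ⊔ Ideal.span {f})).toLinearMap =
      (𝒜 p).map ((Ideal.Quotient.mkₐ K J).toLinearMap ∘ₗ LinearMap.mulLeft K f) := by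
  apply le_antisymm
  · rintro _ ⟨⟨a, ha, rfl⟩, hker⟩
    obtain ⟨c, hc⟩ := exists_sub_decompose_mul_mem hJ ha ((mk_mem_ker_factor _ a).mp hker)
    rw [DirectSum.coe_decompose_mul_of_left_mem_of_le 𝒜 hf (Nat.le_add_left d p),
      Nat.add_sub_cancel] at hc
    exact ⟨_, SetLike.coe_mem _, (Ideal.Quotient.eq.mpr hc).symm⟩
  · rintro _ ⟨c, hc, rfl⟩
    refine ⟨⟨f * c, add_comm p d ▸ SetLike.mul_mem_graded hf hc, rfl⟩, ?_⟩
    exact (mk_mem_ker_factor _ _).mpr (Ideal.mem_sup_right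
      (Ideal.mul_mem_right _ _ (Ideal.mem_span_singleton_self f)))

lemma quotientComponent_inf_ker_factor_of_lt (hJ : J.IsHomogeneous 𝒜) (hf : f ∈ 𝒜 d) {p : ℕ}
    (hp : p < d) :
    quotientComponent 𝒜 J p ⊓ LinearMap.ker
        (Ideal.Quotient.factorₐ K (le_sup_left : J ≤ J ⊔ Ideal.span {f})).toLinearMap = ⊥ := by
  rw [eq_bot_iff]
  rintro _ ⟨⟨a, ha, rfl⟩, hker⟩
  obtain ⟨c, hc⟩ := exists_sub_decompose_mul_mem hJ ha ((mk_mem_ker_factor _ a).mp hker)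
  rw [DirectSum.coe_decompose_mul_of_left_mem_of_not_le 𝒜 hf hp.not_ge, sub_zero] at hc
  exact Ideal.Quotient.eq_zero_iff_mem.mpr hc

variable [∀ p, FiniteDimensional K (𝒜 p)]

theorem hilbertSeries_eq_X_pow_mul_colon_add (hJ : J.IsHomogeneous 𝒜) (hf : f ∈ 𝒜 d) :
    hilbertSeries 𝒜 J =
      PowerSeries.X ^ d * hilbertSeries 𝒜 (J.colon {f}) +
        hilbertSeries 𝒜 (J ⊔ Ideal.span {f}) := by
  ext p
  have hrank := finrank_map_add_finrank_inf_ker (quotientComponent 𝒜 J p)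
    (Ideal.Quotient.factorₐ K (le_sup_left : J ≤ J ⊔ Ideal.span {f})).toLinearMap
  rw [map_factor_quotientComponent] at hrank
  simp only [hilbertSeries, map_add, PowerSeries.coeff_X_pow_mul', PowerSeries.coeff_mk]
  split_ifs with hp
  · obtain ⟨n, rfl⟩ := Nat.exists_eq_add_of_le' hp
    rw [quotientComponent_inf_ker_factor hJ hf, finrank_map_mulLeft_mk] at hrank
    rw [Nat.add_sub_cancel, ← hrank, Nat.cast_add, add_comm]
  · rw [quotientComponent_inf_ker_factor_of_lt hJ hf (not_le.mp hp), finrank_bot] at hrank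
    rw [← hrank, add_zero, zero_add]

theorem hilbertSeries_sup_span_singleton (hJ : J.IsHomogeneous 𝒜) (hf : f ∈ 𝒜 d)
    (hreg : J.colon {f} = J) :
    hilbertSeries 𝒜 (J ⊔ Ideal.span {f}) = (1 - PowerSeries.X ^ d) * hilbertSeries 𝒜 J := by
  have hexact := hilbertSeries_eq_X_pow_mul_colon_add hJ hf
  rw [hreg] at hexact
  linear_combination -hexact

lemma colon_singleton_eq_self_of_isPrime (hJ : J.IsPrime) (hf : f ∉ J) : J.colon {f} = J := by
  ext a
  rw [Submodule.mem_colon_singleton, smul_eq_mul, hJ.mul_mem_right_iff hf]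

lemma colon_span_singleton_sup_mul {P : Ideal A} {q u : A} (hreg : P.colon {u} = P)
    (hq : q ∈ P) : (Ideal.span {q} ⊔ Ideal.span {u} * P).colon {u} = P := by
  apply le_antisymm
  · have hle : Ideal.span {q} ⊔ Ideal.span {u} * P ≤ P :=
      sup_le ((Ideal.span_singleton_le_iff_mem P).mpr hq) Ideal.mul_le_right
    exact (Submodule.colon_mono hle le_rfl).trans_eq hreg
  · intro a ha
    rw [Submodule.mem_colon_singleton, smul_eq_mul, mul_comm a u]
    exact Ideal.mem_sup_right (Submodule.mul_mem_mul (Ideal.mem_span_singleton_self u) ha)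

theorem hilbertSeries_span_singleton_sup_mul {P : Ideal A} {q u : A} {e : ℕ}
    (hP : P.IsHomogeneous 𝒜) (hu : u ∈ 𝒜 e) (huP : P.colon {u} = P) (hq : q ∈ 𝒜 d)
    (hqP : q ∈ P) (hqu : (Ideal.span {u}).colon {q} = Ideal.span {u}) :
    hilbertSeries 𝒜 (Ideal.span {q} ⊔ Ideal.span {u} * P) =
      PowerSeries.X ^ e * hilbertSeries 𝒜 P +
        (1 - PowerSeries.X ^ d) * hilbertSeries 𝒜 (Ideal.span {u}) := by
  have hspan {x : A} {n : ℕ} (hx : x ∈ 𝒜 n) : (Ideal.span {x}).IsHomogeneous 𝒜 :=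
    Ideal.homogeneous_span 𝒜 _ (by rintro _ rfl; exact ⟨n, hx⟩)
  have hsup : Ideal.span {q} ⊔ Ideal.span {u} * P ⊔ Ideal.span {u} =
      Ideal.span {u} ⊔ Ideal.span {q} := by
    rw [sup_assoc, sup_eq_right.mpr (Ideal.mul_le_left : Ideal.span {u} * P ≤ _), sup_comm]
  rw [hilbertSeries_eq_X_pow_mul_colon_add ((hspan hq).sup ((hspan hu).mul hP)) hu,
    colon_span_singleton_sup_mul huP hqP, hsup,
    hilbertSeries_sup_span_singleton (hspan hu) hq hqu]

end GradedAlgebra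

section WeightedGrading

lemma span_X_image_eq_ker {σ R : Type*} [CommRing R] (s : Set σ) :
    Ideal.span (X '' s) = RingHom.ker (aeval (R := R) (sᶜ.indicator (X (R := R)))) := by
  apply le_antisymm
  · rw [Ideal.span_le]
    rintro _ ⟨i, hi, rfl⟩
    simp [hi]
  · intro p hp
    have hmk : (Ideal.Quotient.mkₐ R (Ideal.span (X '' s))).comp (aeval (sᶜ.indicator X)) =
        Ideal.Quotient.mkₐ R (Ideal.span (X '' s)) := by
      ext i
      by_cases hi : i ∈ s
      · have hXi : (X i : MvPolynomial σ R) ∈ Ideal.span (X '' s) :=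
          Ideal.subset_span (Set.mem_image_of_mem X hi)
        simp [hi, Ideal.Quotient.eq_zero_iff_mem.mpr hXi]
      · simp [hi]
    rw [← Ideal.Quotient.eq_zero_iff_mem]
    have hp' := DFunLike.congr_fun hmk p
    rw [AlgHom.comp_apply, RingHom.mem_ker.mp hp, map_zero] at hp'
    exact hp'.symm

lemma isPrime_span_X_image {σ R : Type*} [CommRing R] [IsDomain R] (s : Set σ) :
    (Ideal.span (X '' s : Set (MvPolynomial σ R))).IsPrime :=
  span_X_image_eq_ker (R := R) s ▸ RingHom.ker_isPrime _

lemma X_notMem_span_X_image {σ R : Type*} [CommRing R] [Nontrivial R] {s : Set σ} {i : σ}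
    (hi : i ∉ s) : (X i : MvPolynomial σ R) ∉ Ideal.span (X '' s) := by
  simp [span_X_image_eq_ker, hi]

attribute [local instance] weightedGradedAlgebra

variable {σ K : Type*} [Field K] {w : σ → ℕ}

lemma isHomogeneous_span_X_image (w : σ → ℕ) (s : Set σ) :
    (Ideal.span (X '' s)).IsHomogeneous (weightedHomogeneousSubmodule K w) := by
  refine Ideal.homogeneous_span _ _ ?_
  rintro _ ⟨i, -, rfl⟩
  exact ⟨w i, isWeightedHomogeneous_X K w i⟩

lemma finiteDimensional_weightedHomogeneousSubmodule [Finite σ] (hw : ∀ i, w i ≠ 0) (p : ℕ) :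
    FiniteDimensional K (weightedHomogeneousSubmodule K w p) :=
  Module.Finite.iff_fg.mpr (weightedHomogeneousSubmodule_fg K w hw p)

lemma hilbertSeries_span_range_X (w : σ → ℕ) :
    hilbertSeries (weightedHomogeneousSubmodule K w) (Ideal.span (Set.range X)) = 1 := by
  ext p
  have hker : LinearMap.ker (Ideal.Quotient.mkₐ K
      (Ideal.span (Set.range (X : σ → MvPolynomial σ K)))).toLinearMap =
      LinearMap.ker (lcoeff K (0 : σ →₀ ℕ)) := by
    ext f
    change Ideal.Quotient.mk _ f = 0 ↔ coeff 0 f = 0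
    have hne (m : σ →₀ ℕ) : (∃ i ∈ Set.univ, m i ≠ 0) ↔ m ≠ 0 := by simp [Finsupp.ext_iff]
    rw [Ideal.Quotient.eq_zero_iff_mem, ← Set.image_univ, mem_ideal_span_X_image,
      ← notMem_support_iff]
    simp only [hne]
    exact ⟨fun h h0 => h 0 h0 rfl, fun h m hm hm0 => h (hm0 ▸ hm)⟩
  rw [hilbertSeries, PowerSeries.coeff_mk, PowerSeries.coeff_one, quotientComponent,
    finrank_map_eq_of_ker_eq _ hker]
  split_ifs with hp
  · have htop : (weightedHomogeneousSubmodule K w p).map (lcoeff K (0 : σ →₀ ℕ)) = ⊤ := by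
      rw [eq_top_iff, hp]
      exact fun c _ => ⟨C c, isWeightedHomogeneous_C w c, coeff_zero_C c⟩
    rw [htop, finrank_top, Module.finrank_self, Nat.cast_one]
  · have hbot : (weightedHomogeneousSubmodule K w p).map (lcoeff K (0 : σ →₀ ℕ)) = ⊥ := by
      rw [eq_bot_iff, Submodule.map_le_iff_le_comap]
      intro f hf
      by_contra hcoeff
      exact hp ((map_zero (Finsupp.weight w)).symm.trans (hf hcoeff)).symm
    rw [hbot, finrank_bot, Nat.cast_zero]

lemma one_sub_X_pow_mul_hilbertSeries_span_X_image [Finite σ] (hw : ∀ i, w i ≠ 0)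
    {s : Set σ} {i : σ} (hi : i ∉ s) :
    (1 - PowerSeries.X ^ w i) *
        hilbertSeries (weightedHomogeneousSubmodule K w) (Ideal.span (X '' s)) =
      hilbertSeries (weightedHomogeneousSubmodule K w) (Ideal.span (X '' insert i s)) := by
  have := finiteDimensional_weightedHomogeneousSubmodule (K := K) hw
  have hX : X i ∈ weightedHomogeneousSubmodule K w (w i) := isWeightedHomogeneous_X K w i
  rw [Set.image_insert_eq, Ideal.span_insert, sup_comm]
  have hreg := colon_singleton_eq_self_of_isPrime (isPrime_span_X_image (R := K) s)
    (X_notMem_span_X_image (R := K) hi)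
  exact (hilbertSeries_sup_span_singleton (isHomogeneous_span_X_image (K := K) w s) hX hreg).symm

theorem prod_compl_mul_hilbertSeries_span_X_image [Fintype σ] [DecidableEq σ]
    (hw : ∀ i, w i ≠ 0) (s : Finset σ) :
    (∏ i ∈ sᶜ, (1 - PowerSeries.X ^ w i)) *
      hilbertSeries (weightedHomogeneousSubmodule K w) (Ideal.span (X '' (s : Set σ))) = 1 := by
  obtain ⟨t, rfl⟩ := compl_surjective s
  rw [compl_compl]
  induction t using Finset.induction_on with
  | empty => simp [hilbertSeries_span_range_X w]
  | insert i t hi ih =>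
    rw [Finset.prod_insert hi, mul_comm (1 - _), mul_assoc,
      one_sub_X_pow_mul_hilbertSeries_span_X_image hw (by simp), ← Finset.coe_insert,
      Finset.insert_compl_insert hi, ih]

theorem hilbertSeries_span_sq_sub_mul_mul_mul [Finite σ] (hw : ∀ i, w i ≠ 0)
    {r s t u : σ} (hur : u ≠ r) (hut : u ≠ t) (hrt : r ≠ t) (hdeg : w r + w s = 2 * w t) :
    hilbertSeries (weightedHomogeneousSubmodule K w)
        (Ideal.span {X t ^ 2 - X r * X s, X t * X u, X r * X u}) =
      PowerSeries.X ^ w u *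
          hilbertSeries (weightedHomogeneousSubmodule K w) (Ideal.span (X '' {r, t})) +
        (1 - PowerSeries.X ^ (2 * w t)) *
          hilbertSeries (weightedHomogeneousSubmodule K w) (Ideal.span (X '' {u})) := by
  classical
  have := finiteDimensional_weightedHomogeneousSubmodule (K := K) hw
  have hsplit : Ideal.span {X t ^ 2 - X r * X s, X t * X u, X r * X u} =
      Ideal.span {(X t ^ 2 - X r * X s : MvPolynomial σ K)} ⊔
        Ideal.span {X u} * Ideal.span (X '' {r, t}) := by
    rw [Ideal.span_insert, Ideal.span_mul_span', Set.image_pair, Set.singleton_mul,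
      Set.image_pair, Set.pair_comm, mul_comm (X u), mul_comm (X u)]
  have hu : X u ∈ weightedHomogeneousSubmodule K w (w u) := isWeightedHomogeneous_X K w u
  have hq : X t ^ 2 - X r * X s ∈ weightedHomogeneousSubmodule K w (2 * w t) :=
    ((isWeightedHomogeneous_X K w t).pow 2).sub
      (smul_eq_mul 2 (w t) ▸ hdeg ▸
        (isWeightedHomogeneous_X K w r).mul (isWeightedHomogeneous_X K w s))
  have hX {i : σ} (hi : i ∈ ({r, t} : Set σ)) :
      (X i : MvPolynomial σ K) ∈ Ideal.span (X '' {r, t}) :=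
    Ideal.subset_span (Set.mem_image_of_mem X hi)
  have hqP : (X t ^ 2 - X r * X s : MvPolynomial σ K) ∈ Ideal.span (X '' {r, t}) :=
    sub_mem (Ideal.pow_mem_of_mem _ (hX (by simp)) 2 two_pos)
      (Ideal.mul_mem_right _ _ (hX (by simp)))
  have hqu : (X t ^ 2 - X r * X s : MvPolynomial σ K) ∉ Ideal.span {X u} := by
    rw [Ideal.mem_span_singleton]
    rintro ⟨g, hg⟩
    simpa [hut, hrt] using congrArg (eval (Pi.single t 1)) hg
  have huprime : (Ideal.span {(X u : MvPolynomial σ K)}).IsPrime := by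
    simpa using isPrime_span_X_image (R := K) {u}
  rw [hsplit, Set.image_singleton]
  exact hilbertSeries_span_singleton_sup_mul (isHomogeneous_span_X_image w _) hu
    (colon_singleton_eq_self_of_isPrime (isPrime_span_X_image _)
      (X_notMem_span_X_image (by simp [hur, hut])))
    hq hqP (colon_singleton_eq_self_of_isPrime huprime hqu)

end WeightedGrading

theorem stmt6_general (K : Type*) [Field K] :
    (IsWeightedHomogeneous w6 (X 4 ^ 2 - X 2 * X 3 : MvPolynomial (Fin 6) K) 4 ∧
      IsWeightedHomogeneous w6 (X 4 * X 5 : MvPolynomial (Fin 6) K) 5 ∧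
      IsWeightedHomogeneous w6 (X 2 * X 5 : MvPolynomial (Fin 6) K) 5) ∧
    (1 - PowerSeries.X) * (1 - PowerSeries.X ^ 2) ^ 2 * (1 - PowerSeries.X ^ 3) *
        hilbertSeries (weightedHomogeneousSubmodule K w6)
          (Ideal.span {X 4 ^ 2 - X 2 * X 3, X 4 * X 5, X 2 * X 5}) =
      1 + PowerSeries.X + 2 * PowerSeries.X ^ 2 + 2 * PowerSeries.X ^ 3
        + 2 * PowerSeries.X ^ 4 := by
  have hX := isWeightedHomogeneous_X K w6
  refine ⟨⟨((hX 4).pow 2).sub ((hX 2).mul (hX 3)), (hX 4).mul (hX 5), (hX 2).mul (hX 5)⟩, ?_⟩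
  have hw : ∀ i, w6 i ≠ 0 := by decide
  have hsplit := hilbertSeries_span_sq_sub_mul_mul_mul (K := K) (r := 2) (s := 3) (t := 4) (u := 5)
    hw (by decide) (by decide) (by decide) rfl
  have hP := prod_compl_mul_hilbertSeries_span_X_image (K := K) hw {2, 4}
  have hU := prod_compl_mul_hilbertSeries_span_X_image (K := K) hw {5}
  have hprodP : ∏ i ∈ ({2, 4} : Finset (Fin 6))ᶜ, (1 - PowerSeries.X ^ w6 i : PowerSeries ℤ) =
      (1 - PowerSeries.X) ^ 2 * (1 - PowerSeries.X ^ 2) * (1 - PowerSeries.X ^ 3) := by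
    rw [show ({2, 4} : Finset (Fin 6))ᶜ = {0, 1, 3, 5} by decide]
    simp [w6, sq, mul_assoc]
  have hprodU : ∏ i ∈ ({5} : Finset (Fin 6))ᶜ, (1 - PowerSeries.X ^ w6 i : PowerSeries ℤ) =
      (1 - PowerSeries.X) ^ 2 * (1 - PowerSeries.X ^ 2) ^ 3 := by
    rw [show ({5} : Finset (Fin 6))ᶜ = {0, 1, 2, 3, 4} by decide]
    simp [w6, pow_succ, mul_assoc]
  rw [hprodP, Finset.coe_pair] at hP
  rw [hprodU, Finset.coe_singleton] at hU
  rw [hsplit]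
  change _ * (PowerSeries.X ^ 3 * _ + (1 - PowerSeries.X ^ 4) * _) = _
  linear_combination PowerSeries.X ^ 3 * (1 + PowerSeries.X) * hP +
    (1 + PowerSeries.X ^ 2) * (1 + PowerSeries.X + PowerSeries.X ^ 2) * hU

/-- With the grading `deg b = deg σ₁ = 1`, `deg ρ = deg σ₂ = deg τ = 2`,
`deg σ₃ = 3`, the ideal `(τ²−ρσ₂, τσ₃, ρσ₃)` is homogeneous (its generators are
homogeneous of degrees 4, 5, 5), and the Hilbert series of the graded quotient satisfies
`(1−T)(1−T²)²(1−T³) · Σ_p dim_ℂ (R/I)_p · T^p = 1 + T + 2T² + 2T³ + 2T⁴` in `ℤ[[T]]`. -/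
theorem stmt6 :
    (IsWeightedHomogeneous w6 (τ ^ 2 - ρ * σ₂) 4 ∧
      IsWeightedHomogeneous w6 (τ * σ₃) 5 ∧
      IsWeightedHomogeneous w6 (ρ * σ₃) 5) ∧
    (1 - PowerSeries.X) * (1 - PowerSeries.X ^ 2) ^ 2 * (1 - PowerSeries.X ^ 3) *
        PowerSeries.mk (fun p => (Module.finrank ℂ (comp6 p) : ℤ)) =
      1 + PowerSeries.X + 2 * PowerSeries.X ^ 2 + 2 * PowerSeries.X ^ 3
        + 2 * PowerSeries.X ^ 4 := by
  exact stmt6_general ℂ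

end
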